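/- Let L and S be positive integers with S = L+1, let γ ∈ (0,1) be the positive root of Lγ + Sγ² = 1, let (ξ^j)_{j≥1} be the (L,S)-sequence of points, and let (t_n) be given by t₀ = 1, t₁ = L+S, t_n = L t_{n−1} + S t_{n−2}. Then there exist constants c₂, c₂′ > 0 such that for every integer n ≥ 1 one has c₂′ · log t_n ≤ t_n · D(ξ¹, ξ², …, ξ^{t_n}) ≤ c₂ · log t_n. -/

import Mathlib

open Finset Real

noncomputable section

/-- The `k`-th digit of `n` in base `b`. -/
def lsDigit (b n k : ℕ) : ℕ := n / b ^ k % b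

/-- Membership in the set `N_{L,S}`: for every `k`, the pair of consecutive digits
`(a_k(n), a_{k+1}(n))` in base `L+S` does not lie in
`{L,…,L+S−1} × {1,…,L+S−1}`. -/
def memNLS (L S n : ℕ) : Prop :=
  ∀ k : ℕ, ¬ (L ≤ lsDigit (L + S) n k ∧ lsDigit (L + S) n k ≤ L + S - 1 ∧
      1 ≤ lsDigit (L + S) n (k + 1) ∧ lsDigit (L + S) n (k + 1) ≤ L + S - 1)

/-- The modified digit `ã`: `ã = a` if `a ≤ L−1`, and `ã = L + γ(a−L)` if `L ≤ a`. -/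
def lsTilde (L : ℕ) (γ : ℝ) (a : ℕ) : ℝ :=
  if a < L then (a : ℝ) else (L : ℝ) + γ * ((a : ℝ) - (L : ℝ))

/-- The radical-inverse-type function `φ_{L,S}(n) = Σ_{k=0}^{M} ã_k(n) γ^{k+1}`,
with `M = ⌊log_{L+S} n⌋`. -/
def lsPhi (L S : ℕ) (γ : ℝ) (n : ℕ) : ℝ :=
  ∑ k ∈ Finset.range (Nat.log (L + S) n + 1),
    lsTilde L γ (lsDigit (L + S) n k) * γ ^ (k + 1)

/-- The `(L,S)`-sequence of points: `ξ^j = φ_{L,S}(n_j)` where `n_1 < n_2 < ⋯`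
is the increasing enumeration of `N_{L,S}` (so `n_j = Nat.nth (memNLS L S) (j-1)`). -/
def lsSeq (L S : ℕ) (γ : ℝ) (j : ℕ) : ℝ :=
  lsPhi L S γ (Nat.nth (memNLS L S) (j - 1))

/-- One-dimensional discrepancy of the first `N` terms `x 1, …, x N` of a sequence:
`sup_{0 ≤ a < b ≤ 1} |(1/N) Σ_{j=1}^N χ_{[a,b)}(x j) − (b−a)|`. -/
def discrep (x : ℕ → ℝ) (N : ℕ) : ℝ :=
  ⨆ p : {p : ℝ × ℝ // 0 ≤ p.1 ∧ p.1 < p.2 ∧ p.2 ≤ 1},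
    |(∑ j ∈ Finset.Icc 1 N,
        Set.indicator (Set.Ico p.1.1 p.1.2) (fun _ => (1 : ℝ)) (x j)) / N
      - (p.1.2 - p.1.1)|

/-- Two-dimensional (star) discrepancy of the first `N` terms of a sequence of points
in the unit square:
`sup_{0 < a ≤ 1, 0 < b ≤ 1} |(1/N) Σ_{j=1}^N χ_{[0,a)×[0,b)}(x j) − ab|`. -/
def discrep2 (x : ℕ → ℝ × ℝ) (N : ℕ) : ℝ :=
  ⨆ p : {p : ℝ × ℝ // 0 < p.1 ∧ p.1 ≤ 1 ∧ 0 < p.2 ∧ p.2 ≤ 1},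
    |(∑ j ∈ Finset.Icc 1 N,
        Set.indicator (Set.Ico (0 : ℝ) p.1.1) (fun _ => (1 : ℝ)) (x j).1 *
        Set.indicator (Set.Ico (0 : ℝ) p.1.2) (fun _ => (1 : ℝ)) (x j).2) / N
      - p.1.1 * p.1.2|

/-- The sum of `g` over the left endpoints of the intervals of the `(m-1)`-st `(L,S)`-partition
(with `{0}` as set of left endpoints for `m = 0`), computed through the self-similarity of the
partitions. -/
def lsSum (L S : ℕ) (γ : ℝ) : ℕ → (ℝ → ℝ) → ℝ
  | 0, g => g 0
  | 1, g => g 0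
  | m + 2, g => ∑ i ∈ Finset.range L, lsSum L S γ (m + 1) (fun y => g (γ * (i + y))) +
      ∑ j ∈ Finset.range S, lsSum L S γ m (fun y => g (γ * L + γ ^ 2 * (j + y)))

theorem sum_range_mul_eq (b K : ℕ) (f : ℕ → ℝ) :
    ∑ m ∈ Finset.range (b * K), f m =
      ∑ a ∈ Finset.range b, ∑ q ∈ Finset.range K, f (a + b * q) := by
  rw [Finset.sum_comm]
  induction K with
  | zero => simp
  | succ K ih =>
    rw [Finset.sum_range_succ, ← ih, Nat.mul_succ, Finset.sum_range_add]
    congr 1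
    exact Finset.sum_congr rfl fun a _ => by rw [add_comm]

section Digits

theorem lsDigit_zero {b a : ℕ} (q : ℕ) (ha : a < b) : lsDigit b (a + b * q) 0 = a := by
  simp [lsDigit, Nat.mod_eq_of_lt ha]

theorem lsDigit_succ {b a : ℕ} (q k : ℕ) (ha : a < b) :
    lsDigit b (a + b * q) (k + 1) = lsDigit b q k := by
  have hb : 0 < b := by omega
  unfold lsDigit
  rw [pow_succ', ← Nat.div_div_eq_div_mul, Nat.add_mul_div_left _ _ hb, Nat.div_eq_of_lt ha,
    zero_add]

theorem memNLS_add_mul_iff {L S a : ℕ} (q : ℕ) (ha : a < L + S) :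
    memNLS L S (a + (L + S) * q) ↔ (L ≤ a → q % (L + S) = 0) ∧ memNLS L S q := by
  have hq : q % (L + S) < L + S := Nat.mod_lt _ (by omega)
  have h0 : lsDigit (L + S) q 0 = q % (L + S) := by simp [lsDigit]
  constructor
  · intro h
    refine ⟨fun hLa => ?_, fun k => ?_⟩
    · have := h 0
      rw [lsDigit_zero q ha, lsDigit_succ q 0 ha, h0] at this
      omega
    · have := h (k + 1)
      rwa [lsDigit_succ q k ha, lsDigit_succ q (k + 1) ha] at this
  · rintro ⟨h1, h2⟩ k
    cases k with
    | zero =>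
      rw [lsDigit_zero q ha, lsDigit_succ q 0 ha, h0]
      omega
    | succ k =>
      rw [lsDigit_succ q k ha, lsDigit_succ q (k + 1) ha]
      exact h2 k

theorem memNLS_zero (L S : ℕ) : memNLS L S 0 := by
  intro k
  simp [lsDigit]

theorem lsPhi_zero {L : ℕ} (S : ℕ) (γ : ℝ) (hL : 0 < L) : lsPhi L S γ 0 = 0 := by
  simp [lsPhi, lsDigit, lsTilde, hL]

theorem lsPhi_add_mul {L S a : ℕ} (γ : ℝ) (q : ℕ) (hL : 0 < L) (hS : 0 < S) (ha : a < L + S) :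
    lsPhi L S γ (a + (L + S) * q) = γ * (lsTilde L γ a + lsPhi L S γ q) := by
  rcases Nat.eq_zero_or_pos q with rfl | hq
  · rw [lsPhi_zero S γ hL]
    have : Nat.log (L + S) (a + (L + S) * 0) = 0 := by
      apply Nat.log_of_lt
      simpa using ha
    unfold lsPhi
    rw [this, Finset.sum_range_one, lsDigit_zero 0 ha]
    ring
  · have hb : 1 < L + S := by omega
    have hlog : Nat.log (L + S) (a + (L + S) * q) = Nat.log (L + S) q + 1 := by
      rw [Nat.log_of_one_lt_of_le hb (by nlinarith), Nat.add_mul_div_left _ _ (by omega),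
        Nat.div_eq_of_lt ha, zero_add]
    unfold lsPhi
    rw [hlog, Finset.sum_range_succ', lsDigit_zero q ha, mul_add, Finset.mul_sum, add_comm]
    congr 1
    · ring
    · refine Finset.sum_congr rfl fun k _ => ?_
      rw [lsDigit_succ q k ha]
      ring

end Digits

section Enumeration

open Classical in
theorem sum_nth_eq (p : ℕ → Prop) (g : ℕ → ℝ) (N : ℕ) :
    ∑ i ∈ Finset.range (Nat.count p N), g (Nat.nth p i) =
      ∑ m ∈ Finset.range N, if p m then g m else 0 := by
  induction N with
  | zero => simp
  | succ N ih =>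
    rw [Finset.sum_range_succ, ← ih, Nat.count_succ]
    by_cases h : p N
    · simp [h, Finset.sum_range_succ, Nat.nth_count h]
    · simp [h]

open Classical in
theorem sum_memNLS_eq_lsSum {L S : ℕ} (γ : ℝ) (hL : 0 < L) (hS : 0 < S) (n : ℕ) (g : ℝ → ℝ) :
    (∑ m ∈ Finset.range ((L + S) ^ n), if memNLS L S m then g (lsPhi L S γ m) else 0) =
      lsSum L S γ (n + 1) g := by
  induction n using Nat.strong_induction_on generalizing g with
  | _ n ih =>
  match n with
  | 0 => simp [lsSum, memNLS_zero L S, lsPhi_zero S γ hL]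
  | n + 1 =>
    rw [pow_succ', sum_range_mul_eq, Finset.sum_range_add, lsSum]
    congr 1
    · refine Finset.sum_congr rfl fun i hi => ?_
      have hi := Finset.mem_range.1 hi
      rw [← ih n (by omega)]
      refine Finset.sum_congr rfl fun q _ => ?_
      rw [memNLS_add_mul_iff q (by omega), lsPhi_add_mul γ q hL hS (by omega)]
      simp [lsTilde, hi]
    · refine Finset.sum_congr rfl fun j hj => ?_
      have hj := Finset.mem_range.1 hj
      have key : ∀ q, (if memNLS L S (L + j + (L + S) * q)
          then g (lsPhi L S γ (L + j + (L + S) * q)) else 0) =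
          if q % (L + S) = 0 ∧ memNLS L S q then
            g (γ * L + γ ^ 2 * j + γ * lsPhi L S γ q) else 0 := by
        intro q
        rw [memNLS_add_mul_iff q (by omega), lsPhi_add_mul γ q hL hS (by omega)]
        have : lsTilde L γ (L + j) = L + γ * j := by simp [lsTilde]
        rw [this]
        have : γ * (L + γ * j + lsPhi L S γ q) =
          γ * L + γ ^ 2 * j + γ * lsPhi L S γ q := by ring
        rw [this]
        simp
      simp only [key]
      match n with
      | 0 => simp [lsSum, memNLS_zero L S, lsPhi_zero S γ hL]
      | n + 1 =>
        rw [← ih n (by omega), pow_succ', sum_range_mul_eq,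
          Finset.sum_eq_single_of_mem 0 (Finset.mem_range.2 (by omega))]
        · refine Finset.sum_congr rfl fun q _ => ?_
          rw [memNLS_add_mul_iff q (by omega), lsPhi_add_mul γ q hL hS (by omega)]
          have h0 : lsTilde L γ 0 = 0 := by simp [lsTilde, hL]
          have : γ * L + γ ^ 2 * j + γ * (γ * (lsTilde L γ 0 + lsPhi L S γ q)) =
            γ * L + γ ^ 2 * (j + lsPhi L S γ q) := by rw [h0]; ring
          rw [this]
          simp [hL.ne']
        · intro a ha ha0
          refine Finset.sum_eq_zero fun q _ => if_neg ?_
          rintro ⟨h, -⟩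
          rw [Nat.add_mul_mod_self_left, Nat.mod_eq_of_lt (Finset.mem_range.1 ha)] at h
          exact ha0 h

end Enumeration

theorem lsSum_const_one_eq {L S : ℕ} (γ : ℝ) {t : ℕ → ℕ} (ht0 : t 0 = 1) (ht1 : t 1 = L + S)
    (htrec : ∀ n, 2 ≤ n → t n = L * t (n - 1) + S * t (n - 2)) (n : ℕ) :
    lsSum L S γ (n + 1) (fun _ => 1) = t n := by
  induction n using Nat.strong_induction_on with
  | _ n ih =>
  match n with
  | 0 => simp [lsSum, ht0]
  | 1 => simp [lsSum, ht1]
  | n + 2 =>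
    rw [lsSum, ih (n + 1) (by omega), ih n (by omega), htrec (n + 2) (by omega)]
    simp

theorem sum_lsSeq_eq_lsSum {L S : ℕ} (γ : ℝ) (hL : 0 < L) (hS : 0 < S) {t : ℕ → ℕ}
    (ht0 : t 0 = 1) (ht1 : t 1 = L + S)
    (htrec : ∀ n, 2 ≤ n → t n = L * t (n - 1) + S * t (n - 2)) (n : ℕ) (g : ℝ → ℝ) :
    ∑ j ∈ Finset.Icc 1 (t n), g (lsSeq L S γ j) = lsSum L S γ (n + 1) g := by
  classical
  have hcount : Nat.count (memNLS L S) ((L + S) ^ n) = t n := by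
    have h1 := sum_memNLS_eq_lsSum γ hL hS n (fun _ => 1)
    rw [← sum_nth_eq (memNLS L S) (fun _ => 1), lsSum_const_one_eq γ ht0 ht1 htrec] at h1
    simpa using h1
  rw [← sum_memNLS_eq_lsSum γ hL hS n g,
    ← sum_nth_eq (memNLS L S) (fun m => g (lsPhi L S γ m)), hcount, Finset.range_eq_Ico,
    ← Finset.Ico_add_one_right_eq_Icc, ← zero_add 1, ← Finset.sum_Ico_add' _ 0 (t n) 1]
  rfl

section Counting

variable {L S : ℕ} {γ : ℝ}

theorem lsSum_sub (m : ℕ) (g h : ℝ → ℝ) :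
    lsSum L S γ m (fun y => g y - h y) = lsSum L S γ m g - lsSum L S γ m h := by
  induction m using Nat.strong_induction_on generalizing g h with
  | _ m ih =>
  match m with
  | 0 => rfl
  | 1 => rfl
  | m + 2 =>
    simp only [lsSum]
    simp only [ih (m + 1) (by omega) (fun y => g _) (fun y => h _),
      ih m (by omega) (fun y => g _) (fun y => h _), Finset.sum_sub_distrib]
    ring

theorem lsSum_congr (hγ0 : 0 < γ) (hroot : (L : ℝ) * γ + (S : ℝ) * γ ^ 2 = 1) (m : ℕ)
    {g h : ℝ → ℝ} (hgh : ∀ y, 0 ≤ y → y < 1 → g y = h y) :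
    lsSum L S γ m g = lsSum L S γ m h := by
  induction m using Nat.strong_induction_on generalizing g h with
  | _ m ih =>
  match m with
  | 0 => exact hgh 0 le_rfl one_pos
  | 1 => exact hgh 0 le_rfl one_pos
  | m + 2 =>
    rw [lsSum, lsSum]
    congr 1
    · refine Finset.sum_congr rfl fun i hi => ih _ (by omega) fun y hy0 hy1 => ?_
      have hi : (i : ℝ) + 1 ≤ L := by exact_mod_cast Finset.mem_range.1 hi
      refine hgh _ (by positivity) ?_
      have h1 : γ * (i + y) < γ * L := by gcongr; linarith
      have h2 : 0 ≤ (S : ℝ) * γ ^ 2 := by positivity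
      linarith
    · refine Finset.sum_congr rfl fun j hj => ih _ (by omega) fun y hy0 hy1 => ?_
      have hj : (j : ℝ) + 1 ≤ S := by exact_mod_cast Finset.mem_range.1 hj
      refine hgh _ (by positivity) ?_
      have h1 : γ ^ 2 * (j + y) < γ ^ 2 * S := by gcongr; linarith
      linarith

theorem lsSum_eq_zero (hγ0 : 0 < γ) (hroot : (L : ℝ) * γ + (S : ℝ) * γ ^ 2 = 1) (m : ℕ)
    {g : ℝ → ℝ} (hg : ∀ y, 0 ≤ y → y < 1 → g y = 0) : lsSum L S γ m g = 0 := by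
  rw [lsSum_congr hγ0 hroot m (h := fun y => g y - g y) (by simpa using hg), lsSum_sub, sub_self]

/-- The number of left endpoints below `x`. -/
def lsCount (L S : ℕ) (γ : ℝ) (m : ℕ) (x : ℝ) : ℝ :=
  lsSum L S γ m (fun y => if y < x then 1 else 0)

theorem lsCount_zero_right (hγ0 : 0 < γ) (hroot : (L : ℝ) * γ + (S : ℝ) * γ ^ 2 = 1) (m : ℕ) :
    lsCount L S γ m 0 = 0 :=
  lsSum_eq_zero hγ0 hroot m fun _ hy0 _ => if_neg hy0.not_gt

/-- Summing a quantity that is `u` below the index `k`, `c` at `k`, and `0` above it. -/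
theorem sum_range_step {K k : ℕ} (hk : k < K) (u c : ℝ) (f : ℕ → ℝ)
    (hlt : ∀ i < k, f i = u) (heq : f k = c) (hgt : ∀ i, k < i → f i = 0) :
    ∑ i ∈ Finset.range K, f i = k * u + c := by
  obtain ⟨d, rfl⟩ : ∃ d, K = k + 1 + d := ⟨K - (k + 1), by omega⟩
  rw [Finset.sum_range_add, Finset.sum_range_succ, heq,
    Finset.sum_congr rfl fun i hi => hlt i (Finset.mem_range.1 hi),
    Finset.sum_eq_zero fun i _ => hgt (k + 1 + i) (by omega)]
  simp

theorem lsSum_ite_shift (hγ0 : 0 < γ) (hroot : (L : ℝ) * γ + (S : ℝ) * γ ^ 2 = 1) (m : ℕ)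
    {K k : ℕ} (hk : k < K) {y : ℝ} (hy0 : 0 ≤ y) (hy1 : y ≤ 1) :
    ∑ i ∈ Finset.range K, lsSum L S γ m (fun z => if (i : ℝ) + z < k + y then 1 else 0) =
      k * lsSum L S γ m (fun _ => 1) + lsCount L S γ m y := by
  refine sum_range_step hk _ _ _ (fun i hi => ?_) ?_ fun i hi => ?_
  · refine lsSum_congr hγ0 hroot m fun z _ hz1 => if_pos ?_
    have : (i : ℝ) + 1 ≤ k := by exact_mod_cast hi
    linarith
  · simp [lsCount]
  · refine lsSum_eq_zero hγ0 hroot m fun z hz0 _ => if_neg ?_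
    have : (k : ℝ) + 1 ≤ i := by exact_mod_cast hi
    linarith

theorem lsCount_long (hγ0 : 0 < γ) (hroot : (L : ℝ) * γ + (S : ℝ) * γ ^ 2 = 1) (m : ℕ)
    {i : ℕ} (hi : i < L) {y : ℝ} (hy0 : 0 ≤ y) (hy1 : y ≤ 1) :
    lsCount L S γ (m + 2) (γ * (i + y)) =
      i * lsSum L S γ (m + 1) (fun _ => 1) + lsCount L S γ (m + 1) y := by
  have hi' : (i : ℝ) + 1 ≤ L := by exact_mod_cast hi
  rw [lsCount, lsSum, ← lsSum_ite_shift hγ0 hroot (m + 1) hi hy0 hy1]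
  simp only [mul_lt_mul_iff_right₀ hγ0]
  rw [add_eq_left]
  refine Finset.sum_eq_zero fun j _ => ?_
  refine lsSum_eq_zero hγ0 hroot m fun z hz0 _ => if_neg (not_lt.2 ?_)
  have h1 : γ * (i + y) ≤ γ * L := by gcongr; linarith
  have h2 : 0 ≤ γ ^ 2 * (j + z) := by positivity
  linarith

theorem lsCount_short (hγ0 : 0 < γ) (hroot : (L : ℝ) * γ + (S : ℝ) * γ ^ 2 = 1) (m : ℕ)
    {j : ℕ} (hj : j < S) {y : ℝ} (hy0 : 0 ≤ y) (hy1 : y ≤ 1) :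
    lsCount L S γ (m + 2) (γ * L + γ ^ 2 * (j + y)) =
      L * lsSum L S γ (m + 1) (fun _ => 1) +
        (j * lsSum L S γ m (fun _ => 1) + lsCount L S γ m y) := by
  have hγ2 : 0 < γ ^ 2 := by positivity
  rw [lsCount, lsSum, ← lsSum_ite_shift hγ0 hroot m hj hy0 hy1]
  simp only [add_lt_add_iff_left, mul_lt_mul_iff_right₀ hγ2]
  congr 1
  rw [← nsmul_eq_mul, ← Finset.card_range L, ← Finset.sum_const, Finset.card_range]
  refine Finset.sum_congr rfl fun i hi => lsSum_congr hγ0 hroot _ fun z _ hz1 => if_pos ?_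
  have hi : (i : ℝ) + 1 ≤ L := by exact_mod_cast Finset.mem_range.1 hi
  have h1 : γ * (i + z) < γ * L := by gcongr; linarith
  have h2 : 0 ≤ γ ^ 2 * (j + y) := by positivity
  linarith

/-- The counting error on `[0, x)`. -/
def lsError (L S : ℕ) (γ : ℝ) (m : ℕ) (x : ℝ) : ℝ :=
  lsCount L S γ m x - lsSum L S γ m (fun _ => 1) * x

theorem lsError_zero_right (hγ0 : 0 < γ) (hroot : (L : ℝ) * γ + (S : ℝ) * γ ^ 2 = 1) (m : ℕ) :
    lsError L S γ m 0 = 0 := by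
  simp [lsError, lsCount_zero_right hγ0 hroot]

end Counting

section SEqLAddOne

variable {L : ℕ} {γ : ℝ}

theorem add_one_mul_root_eq_one (hγ0 : 0 < γ)
    (hroot : (L : ℝ) * γ + ((L + 1 : ℕ) : ℝ) * γ ^ 2 = 1) : ((L : ℝ) + 1) * γ = 1 := by
  push_cast at hroot
  have h : (((L : ℝ) + 1) * γ - 1) * (γ + 1) = 0 := by linear_combination hroot
  rcases mul_eq_zero.1 h with h | h <;> linarith

theorem lsSum_one_sub (hγ0 : 0 < γ)
    (hroot : (L : ℝ) * γ + ((L + 1 : ℕ) : ℝ) * γ ^ 2 = 1) (m : ℕ) :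
    lsSum L (L + 1) γ m (fun _ => 1) - γ * lsSum L (L + 1) γ (m + 1) (fun _ => 1) =
      (-1) ^ m * (L * γ) := by
  have hγ := add_one_mul_root_eq_one hγ0 hroot
  induction m with
  | zero =>
    simp only [lsSum]
    linear_combination -hγ
  | succ m ih =>
    have hrec : lsSum L (L + 1) γ (m + 2) (fun _ => 1) =
        L * lsSum L (L + 1) γ (m + 1) (fun _ => 1) +
          (L + 1) * lsSum L (L + 1) γ m (fun _ => 1) := by
      rw [lsSum]
      simp
    rw [hrec, pow_succ]
    linear_combination -ih - (lsSum L (L + 1) γ (m + 1) (fun _ => 1) +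
      lsSum L (L + 1) γ m (fun _ => 1)) * hγ

theorem lsError_long (hγ0 : 0 < γ)
    (hroot : (L : ℝ) * γ + ((L + 1 : ℕ) : ℝ) * γ ^ 2 = 1) (m : ℕ)
    {i : ℕ} (hi : i < L) {y : ℝ} (hy0 : 0 ≤ y) (hy1 : y ≤ 1) :
    lsError L (L + 1) γ (m + 2) (γ * (i + y)) =
      lsError L (L + 1) γ (m + 1) y - (-1) ^ m * (L * γ * (i + y)) := by
  have h := lsSum_one_sub hγ0 hroot (m + 1)
  rw [pow_succ] at h
  rw [lsError, lsError, lsCount_long hγ0 hroot m hi hy0 hy1]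
  linear_combination (i + y) * h

theorem lsError_short (hγ0 : 0 < γ)
    (hroot : (L : ℝ) * γ + ((L + 1 : ℕ) : ℝ) * γ ^ 2 = 1) (m : ℕ)
    {j : ℕ} (hj : j < L + 1) {y : ℝ} (hy0 : 0 ≤ y) (hy1 : y ≤ 1) :
    lsError L (L + 1) γ (m + 2) (γ * L + γ ^ 2 * (j + y)) =
      lsError L (L + 1) γ m y - (-1) ^ m * (L * γ * (L - (j + y) * (1 - γ))) := by
  have h := lsSum_one_sub hγ0 hroot (m + 1)
  have h' := lsSum_one_sub hγ0 hroot m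
  rw [pow_succ] at h
  rw [lsError, lsError, lsCount_short hγ0 hroot m hj hy0 hy1]
  linear_combination (L + γ * (j + y)) * h + (j + y) * h'

theorem exists_nat_add_unit {K : ℕ} (hK : 0 < K) {z : ℝ} (hz0 : 0 ≤ z) (hzK : z ≤ K) :
    ∃ i < K, ∃ y : ℝ, 0 ≤ y ∧ y ≤ 1 ∧ z = i + y := by
  rcases hzK.lt_or_eq with h | rfl
  · refine ⟨⌊z⌋₊, (Nat.floor_lt hz0).2 h, z - ⌊z⌋₊, ?_, ?_, by ring⟩
    · linarith [Nat.floor_le hz0]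
    · linarith [Nat.lt_floor_add_one z]
  · refine ⟨K - 1, by omega, 1, zero_le_one, le_rfl, ?_⟩
    rw [Nat.cast_pred hK]
    ring

theorem abs_lsError_le (hL : 0 < L) (hγ0 : 0 < γ) (hγ1 : γ < 1)
    (hroot : (L : ℝ) * γ + ((L + 1 : ℕ) : ℝ) * γ ^ 2 = 1) (m : ℕ)
    {x : ℝ} (hx0 : 0 ≤ x) (hx1 : x ≤ 1) :
    |lsError L (L + 1) γ m x| ≤ 1 + L * m := by
  have hγ := add_one_mul_root_eq_one hγ0 hroot
  have hL0 : (0 : ℝ) < L := by exact_mod_cast hL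
  have hLγ0 : 0 < L * γ := by positivity
  have hLγ : L * γ ≤ 1 := by linarith
  have hbase : ∀ x : ℝ, 0 ≤ x → x ≤ 1 → |(if 0 < x then (1 : ℝ) else 0) - x| ≤ 1 := by
    intro x hx0 hx1
    rw [abs_le]
    split_ifs <;> constructor <;> linarith
  induction m using Nat.strong_induction_on generalizing x with
  | _ m ih =>
  match m with
  | 0 => simpa [lsError, lsCount, lsSum] using hbase x hx0 hx1
  | 1 =>
    refine le_trans (by simpa [lsError, lsCount, lsSum] using hbase x hx0 hx1) (?_ : (1 : ℝ) ≤ _)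
    simp
  | m + 2 =>
    have habs : ∀ a w : ℝ, |a - (-1) ^ m * w| ≤ |a| + |w| := fun a w => by
      refine (abs_sub a _).trans_eq ?_
      simp [abs_mul]
    push_cast
    rcases le_total x (γ * L) with hx | hx
    · obtain ⟨i, hi, y, hy0, hy1, hxy⟩ := exists_nat_add_unit hL (z := x / γ) (by positivity)
        (by rw [div_le_iff₀ hγ0]; linarith)
      have hi' : (i : ℝ) + 1 ≤ L := by exact_mod_cast hi
      obtain rfl : x = γ * (i + y) := by rw [← hxy]; field_simp
      rw [lsError_long hγ0 hroot m hi hy0 hy1]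
      have h1 := ih (m + 1) (by omega) hy0 hy1
      have h2 : |L * γ * (i + y)| ≤ L := by
        rw [abs_of_nonneg (by positivity)]
        nlinarith
      push_cast at h1
      linarith [habs (lsError L (L + 1) γ (m + 1) y) (L * γ * (i + y))]
    · obtain ⟨j, hj, y, hy0, hy1, hxy⟩ := exists_nat_add_unit (Nat.succ_pos L)
        (z := (x - γ * L) / γ ^ 2) (div_nonneg (by linarith) (by positivity))
        (by rw [div_le_iff₀ (by positivity)]; linarith)
      have hj' : (j : ℝ) ≤ L := by exact_mod_cast Nat.lt_succ_iff.1 hj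
      obtain rfl : x = γ * L + γ ^ 2 * (j + y) := by rw [← hxy]; field_simp; ring
      rw [lsError_short hγ0 hroot m hj hy0 hy1]
      have h1 := ih m (by omega) hy0 hy1
      have h3 : (j + y) * (1 - γ) ≤ L := by
        have : (j + y) * (1 - γ) ≤ (L + 1) * (1 - γ) := by
          gcongr
        linarith
      have h4 : 0 ≤ (j + y) * (1 - γ) := mul_nonneg (by positivity) (by linarith)
      have h2 : |L * γ * (L - (j + y) * (1 - γ))| ≤ L := by
        rw [abs_of_nonneg (mul_nonneg hLγ0.le (by linarith))]
        nlinarith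
      linarith [habs (lsError L (L + 1) γ m y) (L * γ * (L - (j + y) * (1 - γ)))]

theorem exists_le_lsError (hL : 0 < L) (hγ0 : 0 < γ) (hγ1 : γ < 1)
    (hroot : (L : ℝ) * γ + ((L + 1 : ℕ) : ℝ) * γ ^ 2 = 1) (m : ℕ) :
    ∃ x : ℝ, 0 ≤ x ∧ x ≤ 1 ∧ (2 ≤ m → 0 < x) ∧
      L * γ ^ 2 * (m - 1) ≤ 2 * ((-1) ^ (m + 1) * lsError L (L + 1) γ m x) := by
  have hL1 : (1 : ℝ) ≤ L := by exact_mod_cast hL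
  have hpos : 0 < L * γ ^ 2 := by positivity
  induction m using Nat.strong_induction_on with
  | _ m ih =>
  match m with
  | 0 =>
    refine ⟨0, le_rfl, zero_le_one, by omega, ?_⟩
    rw [lsError_zero_right hγ0 hroot]
    push_cast
    linarith
  | 1 =>
    refine ⟨0, le_rfl, zero_le_one, by omega, ?_⟩
    rw [lsError_zero_right hγ0 hroot]
    simp
  | m + 2 =>
    obtain ⟨y, hy0, hy1, -, hy⟩ := ih m (by omega)
    have hy2 : γ ^ 2 * y ≤ γ ^ 2 * (L + 1) := by gcongr; linarith
    refine ⟨γ * L + γ ^ 2 * ((0 : ℕ) + y), by positivity, ?_, fun _ => by positivity, ?_⟩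
    · push_cast at hroot ⊢
      linarith
    · rw [lsError_short hγ0 hroot m (Nat.succ_pos L) hy0 hy1]
      have hsq : ((-1 : ℝ) ^ m) ^ 2 = 1 := by rw [← pow_mul, mul_comm, pow_mul]; simp
      have hinc : L * γ ^ 2 ≤ L * γ * (L - y * (1 - γ)) := by
        have : γ ≤ L - y * (1 - γ) := by nlinarith
        have := mul_le_mul_of_nonneg_left this (by positivity : 0 ≤ L * γ)
        linarith
      have heq : (-1 : ℝ) ^ (m + 2 + 1) * (lsError L (L + 1) γ m y -
          (-1) ^ m * (L * γ * (L - ((0 : ℕ) + y) * (1 - γ)))) =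
          (-1) ^ (m + 1) * lsError L (L + 1) γ m y + L * γ * (L - y * (1 - γ)) := by
        push_cast
        linear_combination (L * γ * (L - y * (1 - γ))) * hsq
      rw [heq]
      push_cast
      linarith

end SEqLAddOne

section Growth

variable {L S : ℕ} {t : ℕ → ℕ}

theorem two_pow_le_of_rec (hL : 0 < L) (hS : 2 ≤ S) (ht0 : t 0 = 1) (ht1 : t 1 = L + S)
    (htrec : ∀ n, 2 ≤ n → t n = L * t (n - 1) + S * t (n - 2)) (n : ℕ) : 2 ^ n ≤ t n := by
  induction n using Nat.strong_induction_on with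
  | _ n ih =>
  match n with
  | 0 => simp [ht0]
  | 1 => omega
  | n + 2 =>
    rw [htrec (n + 2) (by omega)]
    calc 2 ^ (n + 2) = 1 * 2 ^ (n + 1) + 2 * 2 ^ n := by ring
      _ ≤ L * t (n + 1) + S * t n := by
        gcongr
        · omega
        · exact ih _ (by omega)
        · exact ih _ (by omega)

theorem le_pow_of_rec (hL : 0 < L) (ht0 : t 0 = 1) (ht1 : t 1 = L + S)
    (htrec : ∀ n, 2 ≤ n → t n = L * t (n - 1) + S * t (n - 2)) (n : ℕ) :
    t n ≤ (L + S) ^ n := by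
  induction n using Nat.strong_induction_on with
  | _ n ih =>
  match n with
  | 0 => simp [ht0]
  | 1 => simp [ht1]
  | n + 2 =>
    rw [htrec (n + 2) (by omega)]
    calc L * t (n + 1) + S * t n ≤ L * (L + S) ^ (n + 1) + S * (L + S) ^ (n + 1) := by
          gcongr
          · exact ih _ (by omega)
          · exact (ih n (by omega)).trans (Nat.pow_le_pow_right (by omega) (by omega))
      _ = (L + S) ^ (n + 2) := by ring

end Growth

/-- If `S = L+1`, then
`c₂′ log t_n ≤ t_n · D(ξ¹,…,ξ^{t_n}) ≤ c₂ log t_n` for all `n ≥ 1`. -/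
theorem ls_partition_discrepancy_S_eq_L_add_one (L S : ℕ) (hL : 0 < L) (hS : 0 < S)
    (hSL : S = L + 1)
    (γ : ℝ) (hγ0 : 0 < γ) (hγ1 : γ < 1)
    (hroot : (L : ℝ) * γ + (S : ℝ) * γ ^ 2 = 1)
    (t : ℕ → ℕ) (ht0 : t 0 = 1) (ht1 : t 1 = L + S)
    (htrec : ∀ n, 2 ≤ n → t n = L * t (n - 1) + S * t (n - 2)) :
    ∃ c₂ c₂' : ℝ, 0 < c₂ ∧ 0 < c₂' ∧ ∀ n : ℕ, 1 ≤ n →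
      c₂' * Real.log (t n) ≤ (t n : ℝ) * discrep (lsSeq L S γ) (t n) ∧
      (t n : ℝ) * discrep (lsSeq L S γ) (t n) ≤ c₂ * Real.log (t n) := by
  subst hSL
  have hL1 : (1 : ℝ) ≤ L := by exact_mod_cast hL
  have htpos : ∀ n, (0 : ℝ) < t n := fun n => by
    exact_mod_cast (Nat.two_pow_pos n).trans_le
      (two_pow_le_of_rec hL (by omega) ht0 ht1 htrec n)
  have hlog2 : 0 < Real.log 2 := Real.log_pos one_lt_two
  have hlogb : 0 < Real.log ((L + (L + 1) : ℕ) : ℝ) :=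
    Real.log_pos (by exact_mod_cast (by omega : 1 < L + (L + 1)))
  have hlower : ∀ n : ℕ, n * Real.log 2 ≤ Real.log (t n) := fun n => by
    rw [← Real.log_pow]
    refine Real.log_le_log (by positivity) ?_
    exact_mod_cast two_pow_le_of_rec hL (by omega) ht0 ht1 htrec n
  have hupper : ∀ n : ℕ, Real.log (t n) ≤ n * Real.log ((L + (L + 1) : ℕ) : ℝ) := fun n => by
    rw [← Real.log_pow]
    refine Real.log_le_log (htpos n) ?_
    exact_mod_cast le_pow_of_rec hL ht0 ht1 htrec n
  have hterm : ∀ (n : ℕ) (a b : ℝ), a < b →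
      |(∑ j ∈ Finset.Icc 1 (t n), Set.indicator (Set.Ico a b) (fun _ => (1 : ℝ))
        (lsSeq L (L + 1) γ j)) / t n - (b - a)| =
      |lsError L (L + 1) γ (n + 1) b - lsError L (L + 1) γ (n + 1) a| / t n := by
    intro n a b hab
    have hind : Set.indicator (Set.Ico a b) (fun _ => (1 : ℝ)) =
        fun y => (if y < b then 1 else 0) - (if y < a then 1 else 0) := by
      ext y
      simp only [Set.indicator_apply, Set.mem_Ico]
      split_ifs <;> grind
    rw [sum_lsSeq_eq_lsSum γ hL hS ht0 ht1 htrec, hind, lsSum_sub]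
    rw [← abs_of_pos (htpos n), ← abs_div, abs_of_pos (htpos n)]
    congr 1
    have := (htpos n).ne'
    simp only [lsError, lsSum_const_one_eq γ ht0 ht1 htrec, lsCount]
    field_simp
    ring
  have hbound : ∀ (n : ℕ) (p : {p : ℝ × ℝ // 0 ≤ p.1 ∧ p.1 < p.2 ∧ p.2 ≤ 1}),
      |(∑ j ∈ Finset.Icc 1 (t n), Set.indicator (Set.Ico p.1.1 p.1.2) (fun _ => (1 : ℝ))
        (lsSeq L (L + 1) γ j)) / t n - (p.1.2 - p.1.1)| ≤
      2 * (1 + L * (n + 1)) / t n := by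
    rintro n ⟨⟨a, b⟩, ha, hab, hb⟩
    dsimp only at ha hab hb ⊢
    rw [hterm n a b hab]
    gcongr
    have h1 := abs_lsError_le hL hγ0 hγ1 hroot (n + 1) ha (hab.le.trans hb)
    have h2 := abs_lsError_le hL hγ0 hγ1 hroot (n + 1) (ha.trans hab.le) hb
    push_cast at h1 h2
    linarith [abs_sub (lsError L (L + 1) γ (n + 1) b) (lsError L (L + 1) γ (n + 1) a)]
  refine ⟨6 * L / Real.log 2, L * γ ^ 2 / (2 * Real.log ((L + (L + 1) : ℕ) : ℝ)),
    by positivity, by positivity, fun n hn => ?_⟩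
  have hn1 : (1 : ℝ) ≤ n := by exact_mod_cast hn
  constructor
  · obtain ⟨x, -, hx1, hx, hle⟩ := exists_le_lsError hL hγ0 hγ1 hroot (n + 1)
    have hx0 := hx (by omega)
    have hsup := le_ciSup (f := fun p : {p : ℝ × ℝ // 0 ≤ p.1 ∧ p.1 < p.2 ∧ p.2 ≤ 1} =>
      |(∑ j ∈ Finset.Icc 1 (t n), Set.indicator (Set.Ico p.1.1 p.1.2) (fun _ => (1 : ℝ))
        (lsSeq L (L + 1) γ j)) / t n - (p.1.2 - p.1.1)|)
      ⟨_, Set.forall_mem_range.2 (hbound n)⟩ ⟨(0, x), le_rfl, hx0, hx1⟩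
    dsimp only at hsup
    rw [hterm n 0 x hx0, lsError_zero_right hγ0 hroot, sub_zero, div_le_iff₀ (htpos n)] at hsup
    change _ ≤ discrep (lsSeq L (L + 1) γ) (t n) * t n at hsup
    have habs : (-1) ^ (n + 1 + 1) * lsError L (L + 1) γ (n + 1) x ≤
        |lsError L (L + 1) γ (n + 1) x| := by
      refine (le_abs_self _).trans_eq ?_
      simp [abs_mul]
    have h3 : L * γ ^ 2 / (2 * Real.log ((L + (L + 1) : ℕ) : ℝ)) * Real.log (t n) ≤
        L * γ ^ 2 * n / 2 := by
      calc _ ≤ L * γ ^ 2 / (2 * Real.log ((L + (L + 1) : ℕ) : ℝ)) *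
            (n * Real.log ((L + (L + 1) : ℕ) : ℝ)) := by gcongr; exact hupper n
        _ = _ := by field_simp
    push_cast at hle h3 ⊢
    linarith
  · have hne : Nonempty {p : ℝ × ℝ // 0 ≤ p.1 ∧ p.1 < p.2 ∧ p.2 ≤ 1} :=
      ⟨⟨(0, 1), le_rfl, one_pos, le_rfl⟩⟩
    have hsup : discrep (lsSeq L (L + 1) γ) (t n) ≤ 2 * (1 + L * (n + 1)) / t n :=
      ciSup_le (hbound n)
    rw [le_div_iff₀ (htpos n)] at hsup
    have h3 : 6 * L * n ≤ 6 * L / Real.log 2 * Real.log (t n) := by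
      calc (6 * L * n : ℝ) = 6 * L / Real.log 2 * (n * Real.log 2) := by field_simp
        _ ≤ _ := by gcongr; exact hlower n
    nlinarith
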